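/- arXiv:1203.0854 — 3 statements merged into one kernel-verified Lean document; each statement's English description precedes it below -/
import Mathlib

section
/- For all positive integers a, b with gcd(a,b) = 1, there exists a natural number j such that (a,b) is an entry of the list L_j. (Every primitive lattice direction in the open first quadrant is eventually reached by the iterated mediant insertions; equivalently, every ray in the first quadrant eventually occurs in the fan of some X_j.) -/
/-!
If `u`, `v` are adjacent in a list, then `u, u + v, v` occur consecutively in its mediant
insertion. Since `(m + n) u + n v = m u + n (u + v)` and `m u + (m + n) v = m (u + v) + n v`,
each subtractive step of Euclid's algorithm on the coefficients of a vector is undone by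
passing to the adjacent pair `(u, u + v)` or `(u + v, v)` after one more insertion. For coprime
coefficients the algorithm ends at `(1, 0)` or `(0, 1)`, that is, at an entry of the list.
-/

/-- Mediant insertion: between each pair of consecutive entries insert their sum. -/
def mediantInsert : List (ℤ × ℤ) → List (ℤ × ℤ)
  | [] => []
  | [a] => [a]
  | a :: b :: t => a :: (a + b) :: mediantInsert (b :: t)

/-- The list `L_j`: `L_0 = [(1,0),(0,1)]` and `L_{j+1}` is obtained from `L_j` by
mediant insertion.  `L_j` encodes the rays of the fan of the toric surface `X_j`
lying in the closed first quadrant, where `X_0 = ℂP¹ × ℂP¹` and `X_{j+1}` is the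
blow-up of `X_j` at all of its torus fixed points. -/
def rayList : ℕ → List (ℤ × ℤ)
  | 0 => [(1, 0), (0, 1)]
  | j + 1 => mediantInsert (rayList j)

/-- The set `S_j = { (ε₁·a, ε₂·b) : (a,b) an entry of L_j, ε₁, ε₂ ∈ {1,−1} }`, the set
of primitive generators of the rays of the fan of the toric surface `X_j`. -/
def raySet (j : ℕ) : Set (ℤ × ℤ) :=
  {p | ∃ q ∈ rayList j, ∃ ε₁ ε₂ : ℤ, (ε₁ = 1 ∨ ε₁ = -1) ∧ (ε₂ = 1 ∨ ε₂ = -1) ∧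
    p = (ε₁ * q.1, ε₂ * q.2)}

theorem coprime_add_induction {motive : ∀ m n : ℕ, m.Coprime n → Prop}
    (one_zero : motive 1 0 (Nat.coprime_one_left 0))
    (zero_one : motive 0 1 (Nat.coprime_one_right 0))
    (add_left : ∀ m n (h : m.Coprime n), motive m n h →
      motive (m + n) n (Nat.coprime_add_self_left.mpr h))
    (add_right : ∀ m n (h : m.Coprime n), motive m n h →
      motive m (m + n) (Nat.coprime_self_add_right.mpr h))
    (m n : ℕ) (h : m.Coprime n) : motive m n h := by
  obtain rfl | hm := m.eq_zero_or_pos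
  · obtain rfl := (Nat.coprime_zero_left n).mp h
    exact zero_one
  obtain rfl | hn := n.eq_zero_or_pos
  · obtain rfl := (Nat.coprime_zero_right m).mp h
    exact one_zero
  obtain hmn | hnm := le_total m n
  · obtain ⟨d, rfl⟩ := Nat.exists_eq_add_of_le hmn
    have h_sub : m.Coprime d := Nat.coprime_self_add_right.mp h
    exact add_right m d h_sub <|
      coprime_add_induction one_zero zero_one add_left add_right m d h_sub
  · obtain ⟨d, rfl⟩ := Nat.exists_eq_add_of_le' hnm
    have h_sub : d.Coprime n := Nat.coprime_add_self_left.mp h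
    exact add_left d n h_sub <|
      coprime_add_induction one_zero zero_one add_left add_right d n h_sub
termination_by m + n

theorem singleton_prefix_mediantInsert_cons (a : ℤ × ℤ) (l : List (ℤ × ℤ)) :
    [a] <+: mediantInsert (a :: l) := by
  cases l <;> simp [mediantInsert]

theorem infix_mediantInsert_of_pair_infix {u v : ℤ × ℤ} {l : List (ℤ × ℤ)}
    (h : [u, v] <:+: l) : [u, u + v, v] <:+: mediantInsert l := by
  induction l using mediantInsert.induct with
  | case1 => simp at h
  | case2 a => simpa using h.length_le
  | case3 a b t ih =>
    rw [mediantInsert]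
    obtain h_head | h_tail := List.infix_cons_iff.mp h
    · obtain ⟨rfl, rfl⟩ : u = a ∧ v = b := by simpa using h_head
      have h_prefix : [u, u + v, v] <+: u :: (u + v) :: mediantInsert (v :: t) := by
        simpa using singleton_prefix_mediantInsert_cons v t
      exact h_prefix.isInfix
    · exact List.infix_cons (List.infix_cons (ih h_tail))

theorem exists_mem_iterate_mediantInsert {m n : ℕ} (hmn : m.Coprime n) {u v : ℤ × ℤ}
    {l : List (ℤ × ℤ)} (huv : [u, v] <:+: l) :
    ∃ k : ℕ, m • u + n • v ∈ mediantInsert^[k] l := by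
  induction m, n, hmn using coprime_add_induction generalizing u v l with
  | one_zero => exact ⟨0, by simpa using huv.subset (by simp : u ∈ [u, v])⟩
  | zero_one => exact ⟨0, by simpa using huv.subset (by simp : v ∈ [u, v])⟩
  | add_left m n _ ih =>
    have h_left : [u, u + v] <:+: mediantInsert l :=
      .trans ⟨[], [v], rfl⟩ (infix_mediantInsert_of_pair_infix huv)
    obtain ⟨k, hk⟩ := ih h_left
    have h_eq : (m + n) • u + n • v = m • u + n • (u + v) := by module
    exact ⟨k + 1, h_eq ▸ hk⟩
  | add_right m n _ ih =>
    have h_right : [u + v, v] <:+: mediantInsert l :=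
      .trans ⟨[u], [], rfl⟩ (infix_mediantInsert_of_pair_infix huv)
    obtain ⟨k, hk⟩ := ih h_right
    have h_eq : m • u + (m + n) • v = m • (u + v) + n • v := by module
    exact ⟨k + 1, h_eq ▸ hk⟩

theorem rayList_eq_iterate (j : ℕ) : rayList j = mediantInsert^[j] [(1, 0), (0, 1)] := by
  induction j with
  | zero => rfl
  | succ j ih => rw [rayList, ih, Function.iterate_succ_apply']

/-- For all positive integers `a, b` with `gcd(a,b) = 1` there is a
natural number `j` such that `(a,b)` is an entry of `L_j`: every primitive lattice
direction in the open first quadrant is eventually reached by the iterated mediant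
insertions. -/
theorem exists_rayList_mem (a b : ℤ) (ha : 0 < a) (hb : 0 < b)
    (hab : Int.gcd a b = 1) : ∃ j : ℕ, (a, b) ∈ rayList j := by
  lift a to ℕ using ha.le
  lift b to ℕ using hb.le
  have h_coprime : a.Coprime b := by simpa using hab
  obtain ⟨j, hj⟩ := exists_mem_iterate_mediantInsert h_coprime
    (List.infix_refl [((1 : ℤ), (0 : ℤ)), (0, 1)])
  exact ⟨j, by simpa [rayList_eq_iterate] using hj⟩
end

section
/- Let n ≥ 1 and let R ⊆ ℤ² be obtained from Σ_n = {(0,−1),(1,0),(0,1),(−1,−n)} by a sequence of m toric blow-up steps. Then at least one of the following holds: (i) R can also be obtained from Σ_{n−1} = {(0,−1),(1,0),(0,1),(−1,−(n−1))} by a sequence of m toric blow-up steps; or (ii) there exists one further toric blow-up step taking R to a set R' such that R' can be obtained from Σ_{n−1} by a sequence of m+1 toric blow-up steps. -/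
/-- The determinant `det(v,w) = v₁w₂ − v₂w₁` of a pair of lattice vectors. -/
def latDet (v w : ℤ × ℤ) : ℤ := v.1 * w.2 - v.2 * w.1

/-- `v, w ∈ S` form an adjacent pair of the fan with ray set `S` if `det(v,w) > 0` and
no element of `S` lies in the open cone `{αv + βw : α > 0, β > 0, α, β ∈ ℝ}`. -/
def AdjacentPair (S : Set (ℤ × ℤ)) (v w : ℤ × ℤ) : Prop :=
  v ∈ S ∧ w ∈ S ∧ 0 < latDet v w ∧
    ∀ u ∈ S, ¬ ∃ α β : ℝ, 0 < α ∧ 0 < β ∧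
      (u.1 : ℝ) = α * v.1 + β * w.1 ∧ (u.2 : ℝ) = α * v.2 + β * w.2

/-- A toric blow-up step replaces the ray set `S` by `S ∪ {v+w}` for an adjacent pair
`(v,w)` of `S`; this is the fan-level description of blowing up the torus fixed point
corresponding to the two-dimensional cone spanned by `v` and `w`. -/
def BlowUpStep (S T : Set (ℤ × ℤ)) : Prop :=
  ∃ v w : ℤ × ℤ, AdjacentPair S v w ∧ T = S ∪ {v + w}

/-- `BlowUpSeq m S T` means `T` is obtained from `S` by a sequence of `m` toric
blow-up steps. -/
def BlowUpSeq : ℕ → Set (ℤ × ℤ) → Set (ℤ × ℤ) → Prop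
  | 0, S, T => T = S
  | m + 1, S, T => ∃ R : Set (ℤ × ℤ), BlowUpSeq m S R ∧ BlowUpStep R T

/-- `Σ_n = {(0,−1),(1,0),(0,1),(−1,−n)}`, the set of ray generators of the fan of the
Hirzebruch surface `F_n` (with `F_0 = ℂP¹ × ℂP¹`). -/
def hirzebruchFan (n : ℕ) : Set (ℤ × ℤ) :=
  {(0, -1), (1, 0), (0, 1), (-1, -(n : ℤ))}

/-!
The common blow-up of `F_n` and `F_{n-1}` is the one of the elementary transformation:
`Σ_n ∪ {(-1, -(n-1))} = Σ_{n-1} ∪ {(-1, -n)}`, a blow-up of `Σ_n` at `((0, 1), (-1, -n))` and of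
`Σ_{n-1}` at `((-1, -(n-1)), (0, -1))`. Open cones of distinct adjacent pairs are disjoint, so
blow-ups at distinct pairs commute. Hence either the given sequence blows up `((0, 1), (-1, -n))`
at some point, and that step can be moved to the front, or this pair is still adjacent in `R`, and
blowing it up after the sequence gives the same set as blowing it up before.
-/

/-- The lattice points of the open real cone spanned by `v` and `w`, in the parametrized form
used by `AdjacentPair`. -/
def openCone (v w : ℤ × ℤ) : Set (ℤ × ℤ) :=
  {u | ∃ α β : ℝ, 0 < α ∧ 0 < β ∧
    (u.1 : ℝ) = α * v.1 + β * w.1 ∧ (u.2 : ℝ) = α * v.2 + β * w.2}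

/-- Distinct vectors of `S` span distinct rays, as for the ray generators of a fan. Opposite
vectors are allowed; `0` belongs to such a set only if the set is `{0}`. -/
def DistinctRays (S : Set (ℤ × ℤ)) : Prop :=
  S.Pairwise fun x y ↦ ¬ SameRay ℤ x y

section Determinant

theorem latDet_swap (v w : ℤ × ℤ) : latDet w v = -latDet v w := by
  unfold latDet
  ring

theorem latDet_mul_latDet_eq_add (v a p w : ℤ × ℤ) :
    latDet a w * latDet v p = latDet v a * latDet p w + latDet v w * latDet a p := by
  unfold latDet
  ring

theorem latDet_smul_eq_sub (x y p : ℤ × ℤ) :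
    latDet y p • x = latDet x p • y - latDet x y • p := by
  ext <;> simp only [latDet, Prod.fst_sub, Prod.snd_sub, Prod.smul_fst, Prod.smul_snd,
    smul_eq_mul] <;> ring

theorem sameRay_of_latDet_eq_zero {x y p : ℤ × ℤ} (hxy : latDet x y = 0)
    (hp : 0 < latDet x p * latDet y p) : SameRay ℤ x y := by
  have hy : latDet y p ≠ 0 := right_ne_zero_of_mul hp.ne'
  refine Or.inr (Or.inr ⟨latDet y p * latDet y p, latDet x p * latDet y p,
    mul_self_pos.mpr hy, hp, ?_⟩)
  have hprop : latDet y p • x = latDet x p • y := by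
    rw [latDet_smul_eq_sub, hxy, zero_smul, sub_zero]
  rw [mul_smul, hprop, smul_smul, mul_comm]

theorem left_ne_zero_of_latDet_pos {v w : ℤ × ℤ} (h : 0 < latDet v w) : v ≠ 0 := by
  rintro rfl
  simp [latDet] at h

end Determinant

section OpenCone

variable {v w u : ℤ × ℤ}

theorem add_mem_openCone (v w : ℤ × ℤ) : v + w ∈ openCone v w :=
  ⟨1, 1, one_pos, one_pos, by simp, by simp⟩

theorem mem_openCone_iff_latDet_pos (h : 0 < latDet v w) :
    u ∈ openCone v w ↔ 0 < latDet v u ∧ 0 < latDet u w := by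
  have hd : (0 : ℝ) < latDet v w := by exact_mod_cast h
  constructor
  · rintro ⟨α, β, hα, hβ, h₁, h₂⟩
    have hvu : (latDet v u : ℝ) = β * latDet v w := by
      simp only [latDet, Int.cast_sub, Int.cast_mul, h₁, h₂]
      ring
    have huw : (latDet u w : ℝ) = α * latDet v w := by
      simp only [latDet, Int.cast_sub, Int.cast_mul, h₁, h₂]
      ring
    have hvu_pos : (0 : ℝ) < latDet v u := hvu ▸ mul_pos hβ hd
    have huw_pos : (0 : ℝ) < latDet u w := huw ▸ mul_pos hα hd
    exact ⟨by exact_mod_cast hvu_pos, by exact_mod_cast huw_pos⟩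
  · rintro ⟨hvu, huw⟩
    have hvu' : (0 : ℝ) < latDet v u := by exact_mod_cast hvu
    have huw' : (0 : ℝ) < latDet u w := by exact_mod_cast huw
    -- Cramer's rule
    refine ⟨latDet u w / latDet v w, latDet v u / latDet v w,
      div_pos huw' hd, div_pos hvu' hd, ?_, ?_⟩ <;>
    · rw [div_mul_eq_mul_div, div_mul_eq_mul_div, ← add_div, eq_div_iff hd.ne']
      simp only [latDet, Int.cast_sub, Int.cast_mul]
      ring

theorem mem_openCone_of_sameRay {x : ℤ × ℤ} (hu : u ∈ openCone v w) (hx : x ≠ 0) (hu₀ : u ≠ 0)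
    (h : SameRay ℤ u x) : x ∈ openCone v w := by
  obtain ⟨α, β, hα, hβ, h₁, h₂⟩ := hu
  obtain ⟨r, s, hr, hs, hrs⟩ := h.exists_pos hu₀ hx
  have hs' : (0 : ℝ) < s := by exact_mod_cast hs
  have hr' : (0 : ℝ) < r := by exact_mod_cast hr
  have e₁ : (r : ℝ) * u.1 = s * x.1 := by exact_mod_cast congrArg Prod.fst hrs
  have e₂ : (r : ℝ) * u.2 = s * x.2 := by exact_mod_cast congrArg Prod.snd hrs
  refine ⟨r * α / s, r * β / s, div_pos (mul_pos hr' hα) hs',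
    div_pos (mul_pos hr' hβ) hs', ?_, ?_⟩
  · field_simp
    linear_combination r * h₁ - e₁
  · field_simp
    linear_combination r * h₂ - e₂

end OpenCone

section AdjacentPair

variable {S : Set (ℤ × ℤ)} {v w a b p u : ℤ × ℤ}

theorem AdjacentPair.notMem_openCone (h : AdjacentPair S v w) (hu : u ∈ S) : u ∉ openCone v w :=
  h.2.2.2 u hu

theorem AdjacentPair.union_singleton (h : AdjacentPair S v w) (hu : u ∉ openCone v w) :
    AdjacentPair (S ∪ {u}) v w := by
  refine ⟨Or.inl h.1, Or.inl h.2.1, h.2.2.1, ?_⟩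
  rintro x (hx | rfl)
  exacts [h.notMem_openCone hx, hu]

theorem AdjacentPair.latDet_left_nonpos (h : AdjacentPair S v w) (ha : a ∈ S)
    (hp : p ∈ openCone v w) (hap : 0 < latDet a p) : latDet v a ≤ 0 := by
  obtain ⟨hvp, hpw⟩ := (mem_openCone_iff_latDet_pos h.2.2.1).mp hp
  by_contra! hva
  have haw : 0 < latDet a w * latDet v p := by
    rw [latDet_mul_latDet_eq_add]
    exact add_pos (mul_pos hva hpw) (mul_pos h.2.2.1 hap)
  exact h.notMem_openCone ha
    ((mem_openCone_iff_latDet_pos h.2.2.1).mpr ⟨hva, pos_of_mul_pos_left haw hvp.le⟩)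

theorem AdjacentPair.latDet_right_nonpos (h : AdjacentPair S v w) (hb : b ∈ S)
    (hp : p ∈ openCone v w) (hpb : 0 < latDet p b) : latDet b w ≤ 0 := by
  obtain ⟨hvp, hpw⟩ := (mem_openCone_iff_latDet_pos h.2.2.1).mp hp
  by_contra! hbw
  have hvb : 0 < latDet p w * latDet v b := by
    rw [latDet_mul_latDet_eq_add]
    exact add_pos (mul_pos hvp hbw) (mul_pos h.2.2.1 hpb)
  exact h.notMem_openCone hb
    ((mem_openCone_iff_latDet_pos h.2.2.1).mpr ⟨pos_of_mul_pos_right hvb hpw.le, hbw⟩)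

theorem DistinctRays.eq_of_mem_openCone (hS : DistinctRays S) (h : AdjacentPair S v w)
    (h' : AdjacentPair S a b) (hp : p ∈ openCone v w) (hp' : p ∈ openCone a b) :
    (v, w) = (a, b) := by
  obtain ⟨hvp, hpw⟩ := (mem_openCone_iff_latDet_pos h.2.2.1).mp hp
  obtain ⟨hap, hpb⟩ := (mem_openCone_iff_latDet_pos h'.2.2.1).mp hp'
  have hva : latDet v a = 0 := by
    refine (h.latDet_left_nonpos h'.1 hp hap).antisymm ?_
    simpa [latDet_swap v a] using h'.latDet_left_nonpos h.1 hp' hvp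
  have hwb : latDet w b = 0 := by
    refine (h'.latDet_right_nonpos h.2.1 hp' hpw).antisymm ?_
    simpa [latDet_swap w b] using h.latDet_right_nonpos h'.2.1 hp hpb
  have hray_left : SameRay ℤ v a := sameRay_of_latDet_eq_zero hva (mul_pos hvp hap)
  have hray_right : SameRay ℤ w b := by
    refine sameRay_of_latDet_eq_zero (p := p) hwb ?_
    rw [latDet_swap p w, latDet_swap p b, neg_mul_neg]
    exact mul_pos hpw hpb
  exact Prod.ext (hS.eq h.1 h'.1 (not_not_intro hray_left))
    (hS.eq h.2.1 h'.2.1 (not_not_intro hray_right))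

theorem DistinctRays.ne_zero_of_adjacentPair (hS : DistinctRays S) (h : AdjacentPair S v w)
    (hu : u ∈ S) : u ≠ 0 := by
  rintro rfl
  have hv : v ≠ 0 := left_ne_zero_of_latDet_pos h.2.2.1
  exact hS hu h.1 hv.symm (SameRay.zero_left v)

theorem DistinctRays.union_add (hS : DistinctRays S) (h : AdjacentPair S v w) :
    DistinctRays (S ∪ {v + w}) := by
  have hadd : v + w ≠ 0 :=
    left_ne_zero_of_latDet_pos ((mem_openCone_iff_latDet_pos h.2.2.1).mp (add_mem_openCone v w)).2
  have hnew : ∀ x ∈ S, ¬ SameRay ℤ (v + w) x := fun x hx hray ↦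
    h.notMem_openCone hx <| mem_openCone_of_sameRay (add_mem_openCone v w)
      (hS.ne_zero_of_adjacentPair h hx) hadd hray
  rw [Set.union_singleton]
  exact Set.Pairwise.insert hS fun x hx _ ↦ ⟨hnew x hx, fun hray ↦ hnew x hx hray.symm⟩

theorem DistinctRays.adjacentPair_union_add (hS : DistinctRays S) (h : AdjacentPair S v w)
    (h' : AdjacentPair S a b) (hne : (v, w) ≠ (a, b)) : AdjacentPair (S ∪ {v + w}) a b :=
  h'.union_singleton fun hmem ↦ hne (hS.eq_of_mem_openCone h h' (add_mem_openCone v w) hmem)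

end AdjacentPair

section BlowUpSeq

variable {S R T : Set (ℤ × ℤ)} {a b : ℤ × ℤ} {m : ℕ}

theorem BlowUpSeq.cons (h : BlowUpStep S R) (hT : BlowUpSeq m R T) : BlowUpSeq (m + 1) S T := by
  induction m generalizing T with
  | zero => exact ⟨S, rfl, hT ▸ h⟩
  | succ m ih =>
    obtain ⟨Q, hQ, hQT⟩ := hT
    exact ⟨Q, ih hQ, hQT⟩

theorem DistinctRays.of_blowUpSeq (hS : DistinctRays S) (hR : BlowUpSeq m S R) :
    DistinctRays R := by
  induction m generalizing R with
  | zero => exact hR ▸ hS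
  | succ m ih =>
    obtain ⟨Q, hQ, v, w, hvw, rfl⟩ := hR
    exact (ih hQ).union_add hvw

theorem BlowUpSeq.from_union_add_or_union_add (hS : DistinctRays S) (hab : AdjacentPair S a b)
    (hR : BlowUpSeq m S R) :
    (∃ k, m = k + 1 ∧ BlowUpSeq k (S ∪ {a + b}) R) ∨
      AdjacentPair R a b ∧ BlowUpSeq m (S ∪ {a + b}) (R ∪ {a + b}) := by
  induction m generalizing R with
  | zero =>
    obtain rfl : R = S := hR
    exact Or.inr ⟨hab, rfl⟩
  | succ m ih =>
    obtain ⟨Q, hQ, v, w, hvw, rfl⟩ := hR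
    rcases ih hQ with ⟨k, rfl, hk⟩ | ⟨hQab, hQadd⟩
    · exact Or.inl ⟨k + 1, rfl, Q, hk, v, w, hvw, rfl⟩
    by_cases heq : (v, w) = (a, b)
    · obtain ⟨rfl, rfl⟩ := Prod.mk.inj heq
      exact Or.inl ⟨m, rfl, hQadd⟩
    · have hQrays : DistinctRays Q := hS.of_blowUpSeq hQ
      exact Or.inr ⟨hQrays.adjacentPair_union_add hvw hQab heq, Q ∪ {a + b}, hQadd, v, w,
        hQrays.adjacentPair_union_add hQab hvw (Ne.symm heq), Set.union_right_comm ..⟩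

end BlowUpSeq

section Hirzebruch

theorem distinctRays_hirzebruchFan (n : ℕ) : DistinctRays (hirzebruchFan n) := by
  rintro x (rfl | rfl | rfl | rfl) y (rfl | rfl | rfl | rfl) hne hray <;>
  first
  | exact hne rfl
  | obtain ⟨r, s, hr, hs, hrs⟩ := hray.exists_pos (by simp) (by simp)
    simp only [Prod.smul_mk, smul_eq_mul, Prod.mk.injEq] at hrs
    omega

theorem adjacentPair_hirzebruchFan_zero_one (n : ℕ) :
    AdjacentPair (hirzebruchFan n) (0, 1) (-1, -n) := by
  have hdet : 0 < latDet (0, 1) (-1, -n) := by simp [latDet]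
  refine ⟨by simp [hirzebruchFan], by simp [hirzebruchFan], hdet, fun x hx hmem ↦ ?_⟩
  have hcone := (mem_openCone_iff_latDet_pos hdet).mp hmem
  rcases hx with rfl | rfl | rfl | rfl <;> simp [latDet] at hcone

theorem adjacentPair_hirzebruchFan_zero_neg_one (n : ℕ) :
    AdjacentPair (hirzebruchFan n) (-1, -n) (0, -1) := by
  have hdet : 0 < latDet (-1, -n) (0, -1) := by simp [latDet]
  refine ⟨by simp [hirzebruchFan], by simp [hirzebruchFan], hdet, fun x hx hmem ↦ ?_⟩
  have hcone := (mem_openCone_iff_latDet_pos hdet).mp hmem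
  rcases hx with rfl | rfl | rfl | rfl <;> simp [latDet] at hcone

theorem hirzebruchFan_succ_union_add (n : ℕ) :
    hirzebruchFan (n + 1) ∪ {(0, 1) + (-1, -((n + 1 : ℕ) : ℤ))} =
      hirzebruchFan n ∪ {(-1, -(n : ℤ)) + (0, -1)} := by
  have hleft : ((0, 1) + (-1, -((n + 1 : ℕ) : ℤ)) : ℤ × ℤ) = (-1, -(n : ℤ)) := by simp
  have hright : ((-1, -(n : ℤ)) + (0, -1) : ℤ × ℤ) = (-1, -((n + 1 : ℕ) : ℤ)) := by
    simp [add_comm]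
  rw [hleft, hright]
  ext x
  simp only [hirzebruchFan, Set.mem_union, Set.mem_insert_iff, Set.mem_singleton_iff]
  tauto

theorem blowUpStep_hirzebruchFan (n : ℕ) :
    BlowUpStep (hirzebruchFan n)
      (hirzebruchFan (n + 1) ∪ {(0, 1) + (-1, -((n + 1 : ℕ) : ℤ))}) :=
  ⟨_, _, adjacentPair_hirzebruchFan_zero_neg_one n, hirzebruchFan_succ_union_add n⟩

end Hirzebruch

/-- Let `n ≥ 1` and let `R` be obtained from `Σ_n` by a sequence of `m`
toric blow-up steps.  Then either `R` can also be obtained from `Σ_{n−1}` by a sequence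
of `m` toric blow-up steps, or one further toric blow-up step takes `R` to a set `R'`
that can be obtained from `Σ_{n−1}` by a sequence of `m+1` toric blow-up steps. -/
theorem blowup_of_hirzebruch_descends (n : ℕ) (hn : 1 ≤ n) (m : ℕ) (R : Set (ℤ × ℤ))
    (hR : BlowUpSeq m (hirzebruchFan n) R) :
    BlowUpSeq m (hirzebruchFan (n - 1)) R ∨
      ∃ R' : Set (ℤ × ℤ), BlowUpStep R R' ∧ BlowUpSeq (m + 1) (hirzebruchFan (n - 1)) R' := by
  obtain ⟨k, rfl⟩ := Nat.exists_eq_add_of_le' hn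
  rw [Nat.add_sub_cancel]
  rcases hR.from_union_add_or_union_add (distinctRays_hirzebruchFan (k + 1))
      (adjacentPair_hirzebruchFan_zero_one (k + 1)) with ⟨l, rfl, hl⟩ | ⟨hadj, hadd⟩
  · exact Or.inl (hl.cons (blowUpStep_hirzebruchFan k))
  · exact Or.inr ⟨_, ⟨_, _, hadj, rfl⟩, hadd.cons (blowUpStep_hirzebruchFan k)⟩
end

section
/- Let S ⊆ ℤ² be a smooth complete fan, i.e., a finite set of at least three pairwise non-proportional primitive vectors which, when listed in cyclic angular order v_0, v_1, …, v_{d−1}, v_d = v_0, satisfies det(v_i, v_{i+1}) = (v_i)₁(v_{i+1})₂ − (v_i)₂(v_{i+1})₁ = 1 for all i. Then there exists a matrix A ∈ GL₂(ℤ) such that A·S (the image of S under A) is obtained by a finite sequence of toric blow-up steps from either {(1,0),(0,1),(−1,−1)} (the ray set of the fan of ℂP²) or from Σ_n = {(0,−1),(1,0),(0,1),(−1,−n)} for some n ≥ 0 (the ray set of the fan of the Hirzebruch surface F_n). (Fan-level statement of: every smooth compact toric surface is an iterated toric blow-up of ℂP² or of a Hirzebruch surface.) -/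
/-- `S ⊆ ℤ²` is (the ray set of) a smooth complete fan: its elements can be listed,
without repetition and with at least three of them, in cyclic angular order
`v_0, v_1, …, v_{d−1}, v_d = v_0` such that each cyclically consecutive pair spans a
unimodular cone, `det(v_i, v_{i+1}) = 1`, and is an adjacent pair of `S` (no element
of `S` lies in the open cone it spans, which expresses that the listing is in cyclic
angular order, winding exactly once around the origin). -/
def IsSmoothCompleteFan (S : Set (ℤ × ℤ)) : Prop :=
  ∃ l : List (ℤ × ℤ), l.Nodup ∧ 3 ≤ l.length ∧ (∀ x, x ∈ S ↔ x ∈ l) ∧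
    ∀ p ∈ l.zip (l.rotate 1), latDet p.1 p.2 = 1 ∧ AdjacentPair S p.1 p.2

/-- The action of a `2 × 2` integer matrix on `ℤ²`. -/
def matVec (A : Matrix (Fin 2) (Fin 2) ℤ) (p : ℤ × ℤ) : ℤ × ℤ :=
  (A 0 0 * p.1 + A 0 1 * p.2, A 1 0 * p.1 + A 1 1 * p.2)

/-!
If `p, v, s` are consecutive rays of a smooth fan, then `p + s = det(p, s) v`, so `v` can be
contracted exactly when `det(p, s) = 1`. A ray that maximises a linear functional has
`det(p, s) ≤ 1`, hence `det(p, s) ≤ 0` when no ray can be contracted. Convexity then makes `v` the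
only ray strictly to the left of `p`, and a second extremal ray, strictly to the right of `p`,
closes up the fan: it has four rays if `det(p, s) = 0`, and if neither determinant vanishes their
product is at most `1`, which forces both to be `-1` and leaves three rays.
-/

section LatticeDeterminant

variable (u v w x : ℤ × ℤ)

@[simp]
theorem latDet_self : latDet v v = 0 := by
  simp only [latDet]; ring

theorem latDet_anticomm : -latDet v w = latDet w v := by
  simp only [latDet]; ring

@[simp]
theorem latDet_neg_left : latDet (-v) w = -latDet v w := by
  simp only [latDet, Prod.fst_neg, Prod.snd_neg]; ring

@[simp]
theorem latDet_neg_right : latDet v (-w) = -latDet v w := by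
  simp only [latDet, Prod.fst_neg, Prod.snd_neg]; ring

@[simp]
theorem latDet_add_left : latDet (u + v) w = latDet u w + latDet v w := by
  simp only [latDet, Prod.fst_add, Prod.snd_add]; ring

@[simp]
theorem latDet_add_right : latDet u (v + w) = latDet u v + latDet u w := by
  simp only [latDet, Prod.fst_add, Prod.snd_add]; ring

@[simp]
theorem latDet_smul_left (c : ℤ) : latDet (c • v) w = c * latDet v w := by
  simp only [latDet, Prod.smul_fst, Prod.smul_snd, smul_eq_mul]; ring

@[simp]
theorem latDet_smul_right (c : ℤ) : latDet v (c • w) = c * latDet v w := by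
  simp only [latDet, Prod.smul_fst, Prod.smul_snd, smul_eq_mul]; ring

theorem latDet_cramer : latDet v w • x = latDet x w • v + latDet v x • w := by
  ext <;> simp only [latDet, Prod.fst_add, Prod.snd_add, Prod.smul_fst, Prod.smul_snd,
    smul_eq_mul] <;> ring

theorem latDet_plucker :
    latDet u v * latDet w x = latDet u w * latDet v x - latDet u x * latDet v w := by
  simp only [latDet]; ring

variable {u v w x}

theorem eq_latDet_smul_add_latDet_smul (h : latDet v w = 1) (x : ℤ × ℤ) :
    x = latDet x w • v + latDet v x • w := by
  rw [← latDet_cramer, h, one_smul]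

theorem add_eq_latDet_smul (huv : latDet u v = 1) (hvw : latDet v w = 1) :
    u + w = latDet u w • v := by
  rw [latDet_cramer, huv, hvw, one_smul, one_smul]

theorem latDet_add_latDet_eq_mul (huv : latDet u v = 1) (hvw : latDet v w = 1) (x : ℤ × ℤ) :
    latDet x u + latDet x w = latDet u w * latDet x v := by
  rw [← latDet_add_right, add_eq_latDet_smul huv hvw, latDet_smul_right]

theorem mem_openCone_iff (h : 0 < latDet v w) :
    (∃ α β : ℝ, 0 < α ∧ 0 < β ∧
      (u.1 : ℝ) = α * v.1 + β * w.1 ∧ (u.2 : ℝ) = α * v.2 + β * w.2) ↔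
    0 < latDet v u ∧ 0 < latDet u w := by
  have hvw : (0 : ℝ) < latDet v w := by exact_mod_cast h
  constructor
  · rintro ⟨α, β, hα, hβ, h₁, h₂⟩
    have hvu : (latDet v u : ℝ) = β * latDet v w := by
      simp only [latDet]; push_cast; rw [h₁, h₂]; ring
    have huw : (latDet u w : ℝ) = α * latDet v w := by
      simp only [latDet]; push_cast; rw [h₁, h₂]; ring
    have hvu_pos : (0 : ℝ) < latDet v u := hvu ▸ mul_pos hβ hvw
    have huw_pos : (0 : ℝ) < latDet u w := huw ▸ mul_pos hα hvw
    exact ⟨by exact_mod_cast hvu_pos, by exact_mod_cast huw_pos⟩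
  · rintro ⟨hvu, huw⟩
    have hvu' : (0 : ℝ) < latDet v u := by exact_mod_cast hvu
    have huw' : (0 : ℝ) < latDet u w := by exact_mod_cast huw
    refine ⟨latDet u w / latDet v w, latDet v u / latDet v w, div_pos huw' hvw,
      div_pos hvu' hvw, ?_, ?_⟩ <;>
    · rw [div_mul_eq_mul_div, div_mul_eq_mul_div, ← add_div, eq_div_iff hvw.ne']
      simp only [latDet]; push_cast; ring

end LatticeDeterminant

section MatrixAction

variable (A : Matrix (Fin 2) (Fin 2) ℤ)

theorem latDet_matVec (v w : ℤ × ℤ) :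
    latDet (matVec A v) (matVec A w) = A.det * latDet v w := by
  simp only [latDet, matVec, Matrix.det_fin_two]; ring

theorem matVec_add (v w : ℤ × ℤ) : matVec A (v + w) = matVec A v + matVec A w := by
  ext <;> simp only [matVec, Prod.fst_add, Prod.snd_add] <;> ring

variable {A} {S T : Set (ℤ × ℤ)}

theorem AdjacentPair.image_matVec (hA : 0 < A.det) {v w : ℤ × ℤ} (h : AdjacentPair S v w) :
    AdjacentPair (matVec A '' S) (matVec A v) (matVec A w) := by
  obtain ⟨hv, hw, hvw, hempty⟩ := h
  have hvw' : 0 < latDet (matVec A v) (matVec A w) := by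
    rw [latDet_matVec]; exact mul_pos hA hvw
  refine ⟨Set.mem_image_of_mem _ hv, Set.mem_image_of_mem _ hw, hvw', ?_⟩
  rintro _ ⟨u, hu, rfl⟩
  rw [mem_openCone_iff hvw', latDet_matVec, latDet_matVec, mul_pos_iff_of_pos_left hA,
    mul_pos_iff_of_pos_left hA, ← mem_openCone_iff hvw]
  exact hempty u hu

theorem BlowUpStep.image_matVec (hA : 0 < A.det) (h : BlowUpStep S T) :
    BlowUpStep (matVec A '' S) (matVec A '' T) := by
  obtain ⟨v, w, hvw, rfl⟩ := h
  exact ⟨_, _, hvw.image_matVec hA, by rw [Set.image_union, Set.image_singleton, matVec_add]⟩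

theorem BlowUpSeq.image_matVec (hA : 0 < A.det) {m : ℕ} (h : BlowUpSeq m S T) :
    BlowUpSeq m (matVec A '' S) (matVec A '' T) := by
  induction m generalizing T with
  | zero => exact congrArg _ h
  | succ m ih =>
    obtain ⟨R, hSR, hRT⟩ := h
    exact ⟨_, ih hSR, hRT.image_matVec hA⟩

/-- The matrix computing coordinates with respect to the basis `v, w` of `ℤ²`, used to move a fan
to standard position. It is the adjugate of the matrix with columns `v, w`, so it sends `v, w` to
`(1, 0), (0, 1)` only if `det(v, w) = 1`. -/
def coordMatrix (v w : ℤ × ℤ) : Matrix (Fin 2) (Fin 2) ℤ := !![w.2, -w.1; -v.2, v.1]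

theorem det_coordMatrix (v w : ℤ × ℤ) : (coordMatrix v w).det = latDet v w := by
  simp only [coordMatrix, Matrix.det_fin_two_of, latDet]; ring

theorem matVec_coordMatrix (v w x : ℤ × ℤ) :
    matVec (coordMatrix v w) x = (latDet x w, latDet v x) := by
  ext <;> simp [coordMatrix, matVec, latDet] <;> ring

end MatrixAction

/-- `v, w` are consecutive rays of `S`, in counterclockwise order, spanning a smooth cone. -/
def SmoothCone (S : Set (ℤ × ℤ)) (v w : ℤ × ℤ) : Prop :=
  latDet v w = 1 ∧ AdjacentPair S v w

namespace SmoothCone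

variable {S T : Set (ℤ × ℤ)} {v v' w w' : ℤ × ℤ}

theorem left_mem (h : SmoothCone S v w) : v ∈ S := h.2.1

theorem right_mem (h : SmoothCone S v w) : w ∈ S := h.2.2.1

theorem not_between (h : SmoothCone S v w) {u : ℤ × ℤ} (hu : u ∈ S) :
    ¬(0 < latDet v u ∧ 0 < latDet u w) := by
  rw [← mem_openCone_iff h.2.2.2.1]
  exact h.2.2.2.2 u hu

theorem of_not_between (hv : v ∈ S) (hw : w ∈ S) (hvw : latDet v w = 1)
    (h : ∀ u ∈ S, ¬(0 < latDet v u ∧ 0 < latDet u w)) : SmoothCone S v w := by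
  have hpos : 0 < latDet v w := by omega
  exact ⟨hvw, hv, hw, hpos, fun u hu => by rw [mem_openCone_iff hpos]; exact h u hu⟩

theorem ne (h : SmoothCone S v w) : v ≠ w := by
  rintro rfl
  simpa using h.1

theorem anti (h : SmoothCone S v w) (hTS : T ⊆ S) (hv : v ∈ T) (hw : w ∈ T) :
    SmoothCone T v w :=
  .of_not_between hv hw h.1 fun _ hu => h.not_between (hTS hu)

theorem right_unique (h : SmoothCone S v w) (h' : SmoothCone S v w') : w = w' := by
  have hww' : latDet w' w = 0 := by
    have := h.not_between h'.right_mem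
    have := h'.not_between h.right_mem
    have := h.1
    have := h'.1
    have := latDet_anticomm w w'
    omega
  simpa [hww', h'.1] using (eq_latDet_smul_add_latDet_smul h.1 w').symm

theorem left_unique (h : SmoothCone S v w) (h' : SmoothCone S v' w) : v = v' := by
  have hvv' : latDet v v' = 0 := by
    have := h.not_between h'.left_mem
    have := h'.not_between h.left_mem
    have := h.1
    have := h'.1
    have := latDet_anticomm v v'
    omega
  simpa [hvv', h'.1] using (eq_latDet_smul_add_latDet_smul h.1 v').symm

end SmoothCone

/-- A smooth complete fan, described by local conditions instead of by a cyclic list of its rays: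
every ray has a neighbour on either side with which it spans a smooth cone. In this form it is
easy to remove a ray. -/
structure IsUnimodularFan (S : Set (ℤ × ℤ)) : Prop where
  finite : S.Finite
  nonempty : S.Nonempty
  exists_next : ∀ v ∈ S, ∃ w, SmoothCone S v w
  exists_prev : ∀ w ∈ S, ∃ v, SmoothCone S v w

theorem IsSmoothCompleteFan.isUnimodularFan {S : Set (ℤ × ℤ)} (hS : IsSmoothCompleteFan S) :
    IsUnimodularFan S := by
  obtain ⟨l, -, hlen, hmem, hcone⟩ := hS
  obtain rfl : S = {x | x ∈ l} := Set.ext hmem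
  have hl : l.length = (l.rotate 1).length := (l.length_rotate 1).symm
  refine ⟨l.finite_toSet, List.exists_mem_of_length_pos (by omega), fun v hv => ?_, fun w hw => ?_⟩
  · have hv' : v ∈ (l.zip (l.rotate 1)).map Prod.fst := by rwa [List.map_fst_zip hl.le]
    obtain ⟨⟨_, w⟩, hvw, rfl⟩ := List.mem_map.1 hv'
    exact ⟨w, hcone _ hvw⟩
  · have hw' : w ∈ (l.zip (l.rotate 1)).map Prod.snd := by
      rwa [List.map_snd_zip hl.ge, List.mem_rotate]
    obtain ⟨⟨v, _⟩, hvw, rfl⟩ := List.mem_map.1 hw'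
    exact ⟨v, hcone _ hvw⟩

/-- No ray `v` can be contracted. A ray with neighbours `p, s` can be contracted if and only if
`v = p + s`, that is, `det(p, s) = 1`. -/
def IsMinimalFan (S : Set (ℤ × ℤ)) : Prop :=
  ∀ ⦃p v s : ℤ × ℤ⦄, SmoothCone S p v → SmoothCone S v s → latDet p s ≠ 1

namespace IsUnimodularFan

variable {S : Set (ℤ × ℤ)} {p v w s x : ℤ × ℤ}

theorem smul_eq_self (hS : IsUnimodularFan S) {c : ℤ} (hc : 0 ≤ c) (h : c • v ∈ S) :
    c • v = v := by
  obtain ⟨w, hw⟩ := hS.exists_next _ h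
  have hcw : c * latDet v w = 1 := by rw [← latDet_smul_left, hw.1]
  rw [Int.eq_one_of_mul_eq_one_right hc hcw, one_smul]

theorem eq_or_eq_of_mem_cone (hS : IsUnimodularFan S) (h : SmoothCone S v w) (hx : x ∈ S)
    (hvx : 0 ≤ latDet v x) (hxw : 0 ≤ latDet x w) : x = v ∨ x = w := by
  have hx_eq := eq_latDet_smul_add_latDet_smul h.1 x
  rcases hvx.eq_or_lt with h0 | hpos
  · rw [← h0, zero_smul, add_zero] at hx_eq
    exact .inl (hx_eq.trans (hS.smul_eq_self hxw (hx_eq ▸ hx)))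
  · have h0 : latDet x w = 0 := by have := h.not_between hx; omega
    rw [h0, zero_smul, zero_add] at hx_eq
    exact .inr (hx_eq.trans (hS.smul_eq_self hvx (hx_eq ▸ hx)))

theorem smoothCone_sdiff_singleton (hS : IsUnimodularFan S) (hpv : SmoothCone S p v)
    (hvs : SmoothCone S v s) (hps : latDet p s = 1) : SmoothCone (S \ {v}) p s := by
  refine .of_not_between ⟨hpv.left_mem, hpv.ne⟩ ⟨hvs.right_mem, hvs.ne.symm⟩ hps ?_
  rintro u ⟨hu, huv⟩ ⟨hpu, hus⟩
  rcases le_total 0 (latDet u v) with huv_det | huv_det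
  · rcases hS.eq_or_eq_of_mem_cone hpv hu hpu.le huv_det with rfl | rfl
    · simp at hpu
    · exact huv rfl
  · rw [← latDet_anticomm, neg_nonpos] at huv_det
    rcases hS.eq_or_eq_of_mem_cone hvs hu huv_det hus.le with rfl | rfl
    · exact huv rfl
    · simp at hus

theorem sdiff_singleton (hS : IsUnimodularFan S) (hpv : SmoothCone S p v)
    (hvs : SmoothCone S v s) (hps : latDet p s = 1) : IsUnimodularFan (S \ {v}) := by
  have hcone := hS.smoothCone_sdiff_singleton hpv hvs hps
  refine ⟨hS.finite.sdiff, ⟨p, hcone.left_mem⟩, ?_, ?_⟩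
  · rintro x ⟨hx, hxv⟩
    obtain ⟨y, hxy⟩ := hS.exists_next x hx
    by_cases hyv : y = v
    · subst hyv
      exact ⟨s, hxy.left_unique hpv ▸ hcone⟩
    · exact ⟨y, hxy.anti Set.sdiff_subset ⟨hx, hxv⟩ ⟨hxy.right_mem, hyv⟩⟩
  · rintro x ⟨hx, hxv⟩
    obtain ⟨y, hyx⟩ := hS.exists_prev x hx
    by_cases hyv : y = v
    · subst hyv
      exact ⟨p, hyx.right_unique hvs ▸ hcone⟩
    · exact ⟨y, hyx.anti Set.sdiff_subset ⟨hyx.left_mem, hyv⟩ ⟨hx, hxv⟩⟩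

theorem blowUpStep_sdiff_singleton (hS : IsUnimodularFan S) (hpv : SmoothCone S p v)
    (hvs : SmoothCone S v s) (hps : latDet p s = 1) : BlowUpStep (S \ {v}) S := by
  have hv : p + s = v := by rw [add_eq_latDet_smul hpv.1 hvs.1, hps, one_smul]
  refine ⟨p, s, (hS.smoothCone_sdiff_singleton hpv hvs hps).2, ?_⟩
  rw [hv, Set.sdiff_union_of_subset (Set.singleton_subset_iff.2 hpv.right_mem)]

theorem exists_isMinimalFan_blowUpSeq (hS : IsUnimodularFan S) :
    ∃ (R : Set (ℤ × ℤ)) (m : ℕ), IsUnimodularFan R ∧ IsMinimalFan R ∧ BlowUpSeq m R S := by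
  induction hn : S.ncard using Nat.strong_induction_on generalizing S with
  | _ n ih =>
    by_cases hmin : IsMinimalFan S
    · exact ⟨S, 0, hS, hmin, rfl⟩
    · simp only [IsMinimalFan, not_forall, ne_eq, not_not] at hmin
      obtain ⟨p, v, s, hpv, hvs, hps⟩ := hmin
      have hcard : (S \ {v}).ncard < n :=
        hn ▸ Set.ncard_sdiff_singleton_lt_of_mem hpv.right_mem hS.finite
      obtain ⟨R, m, hR, hRmin, hRS⟩ := ih _ hcard (hS.sdiff_singleton hpv hvs hps) rfl
      exact ⟨R, m + 1, hR, hRmin, _, hRS, hS.blowUpStep_sdiff_singleton hpv hvs hps⟩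

theorem exists_latDet_le_one (hS : IsUnimodularFan S) {e f : ℤ × ℤ} (hf : f ∈ S)
    (hef : 0 < latDet e f) :
    ∃ p w s, SmoothCone S p w ∧ SmoothCone S w s ∧ 0 < latDet e w ∧ latDet p s ≤ 1 := by
  -- The second component picks the last ray in counterclockwise order among the maximisers of
  -- `det(e, ·)`.
  obtain ⟨w, hw, hmax⟩ := Set.exists_max_image S
    (fun x => toLex (latDet e x, latDet f x)) hS.finite hS.nonempty
  obtain ⟨p, hpw⟩ := hS.exists_prev w hw
  obtain ⟨s, hws⟩ := hS.exists_next w hw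
  have hle : ∀ x ∈ S, latDet e x ≤ latDet e w := fun x hx =>
    (Prod.Lex.toLex_le_toLex.1 (hmax x hx)).elim le_of_lt fun h => h.1.le
  have hew : 0 < latDet e w := hef.trans_le (hle f hf)
  have hes : latDet e s < latDet e w := by
    rcases Prod.Lex.toLex_le_toLex.1 (hmax s hws.right_mem) with hlt | ⟨heq, hfs⟩
    · exact hlt
    · have hplucker := latDet_plucker e f w s
      simp only at heq hfs
      rw [hws.1, heq] at hplucker
      linarith [mul_le_mul_of_nonneg_left hfs hew.le]
  refine ⟨p, w, s, hpw, hws, hew, ?_⟩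
  have hlt : latDet p s * latDet e w < 2 * latDet e w := by
    rw [← latDet_add_latDet_eq_mul hpw.1 hws.1]
    linarith [hle p hpw.left_mem]
  exact Int.lt_add_one_iff.1 (lt_of_mul_lt_mul_right hlt hew.le)

theorem exists_left_latDet_nonpos (hS : IsUnimodularFan S) (hmin : IsMinimalFan S)
    (hv : v ∈ S) :
    ∃ p w s, SmoothCone S p w ∧ SmoothCone S w s ∧ 0 < latDet v w ∧ latDet p s ≤ 0 := by
  obtain ⟨f, hvf⟩ := hS.exists_next v hv
  obtain ⟨p, w, s, hpw, hws, hvw, hps⟩ :=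
    hS.exists_latDet_le_one hvf.right_mem (hvf.1 ▸ one_pos)
  exact ⟨p, w, s, hpw, hws, hvw, Int.lt_add_one_iff.1 (hps.lt_of_ne (hmin hpw hws))⟩

theorem exists_right_latDet_nonpos (hS : IsUnimodularFan S) (hmin : IsMinimalFan S)
    (hv : v ∈ S) :
    ∃ p w s, SmoothCone S p w ∧ SmoothCone S w s ∧ latDet v w < 0 ∧ latDet p s ≤ 0 := by
  obtain ⟨f, hfv⟩ := hS.exists_prev v hv
  have hf : 0 < latDet (-v) f := by rw [latDet_neg_left, latDet_anticomm, hfv.1]; exact one_pos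
  obtain ⟨p, w, s, hpw, hws, hvw, hps⟩ := hS.exists_latDet_le_one hfv.left_mem hf
  rw [latDet_neg_left, neg_pos] at hvw
  exact ⟨p, w, s, hpw, hws, hvw, Int.lt_add_one_iff.1 (hps.lt_of_ne (hmin hpw hws))⟩

theorem eq_of_latDet_pos (hS : IsUnimodularFan S) (hpw : SmoothCone S p w)
    (hws : SmoothCone S w s) (hps : latDet p s ≤ 0) (hx : x ∈ S) (hpx : 0 < latDet p x) :
    x = w := by
  rcases le_or_gt 0 (latDet x w) with hxw | hxw
  · refine (hS.eq_or_eq_of_mem_cone hpw hx hpx.le hxw).resolve_left ?_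
    rintro rfl
    simp at hpx
  · have hwx : 0 < latDet w x := by rw [← latDet_anticomm]; omega
    have hsum := latDet_add_latDet_eq_mul hpw.1 hws.1 x
    have hxs : 0 < latDet x s := by
      have := mul_nonneg_of_nonpos_of_nonpos hps hxw.le
      have := latDet_anticomm p x
      omega
    exact absurd ⟨hwx, hxs⟩ (hws.not_between hx)

theorem exists_quadrangle (hS : IsUnimodularFan S) (hmin : IsMinimalFan S)
    (hpw : SmoothCone S p w) (hwp : SmoothCone S w (-p)) :
    ∃ w', SmoothCone S (-p) w' ∧ SmoothCone S w' p := by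
  obtain ⟨q, w', t, hqw', hw't, hpw', hqt⟩ := hS.exists_right_latDet_nonpos hmin hpw.left_mem
  have hleft : ∀ x ∈ S, 0 < latDet p x → x = w :=
    fun x hx => hS.eq_of_latDet_pos hpw hwp (by simp) hx
  have hpq : latDet p q ≤ 0 := by
    by_contra! hpos
    obtain rfl := hleft q hqw'.left_mem hpos
    obtain rfl := hqw'.right_unique hwp
    simp at hpw'
  have hpt : latDet p t ≤ 0 := by
    by_contra! hpos
    obtain rfl := hleft t hw't.right_mem hpos
    obtain rfl := hw't.left_unique hpw
    simp at hpw'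
  have hsum : 0 ≤ latDet p q + latDet p t := by
    rw [latDet_add_latDet_eq_mul hqw'.1 hw't.1]
    exact mul_nonneg_of_nonpos_of_nonpos hqt hpw'.le
  have ht : p = t := by
    have hw'p := latDet_anticomm p w'
    refine (hS.eq_or_eq_of_mem_cone hw't hpw.left_mem (by omega) (by omega)).resolve_left ?_
    rintro rfl
    simp at hpw'
  have hq : -p = q := by
    have hqp := latDet_anticomm p q
    refine (hS.eq_or_eq_of_mem_cone hqw' hwp.right_mem (by rw [latDet_neg_right]; omega)
      (by rw [latDet_neg_left]; omega)).resolve_right ?_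
    rintro rfl
    simp at hpw'
  exact ⟨w', hq ▸ hqw', ht ▸ hw't⟩

theorem eq_neg_add_and_eq_of_latDet_neg (hS : IsUnimodularFan S) {t : ℤ × ℤ}
    (hpw : SmoothCone S p w) (hws : SmoothCone S w s) (hst : SmoothCone S s t)
    (hps : latDet p s < 0) (hwt : latDet w t < 0) : s = -(p + w) ∧ t = p := by
  have hpt : latDet p t ≤ 0 := by
    by_contra! hpos
    obtain rfl := hS.eq_of_latDet_pos hpw hws hps.le hst.right_mem hpos
    simp at hwt
  have hprod : latDet w t * latDet p s ≤ 1 := by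
    rw [← latDet_add_latDet_eq_mul hws.1 hst.1, hpw.1]
    omega
  have hps_eq : latDet p s = -1 := by nlinarith
  have hwt_eq : latDet w t = -1 := by nlinarith
  have hps_sum : p + s = -w := by
    rw [add_eq_latDet_smul hpw.1 hws.1, hps_eq, neg_one_smul]
  have hwt_sum : w + t = -s := by
    rw [add_eq_latDet_smul hws.1 hst.1, hwt_eq, neg_one_smul]
  exact ⟨by linear_combination hps_sum, by linear_combination hwt_sum - hps_sum⟩

theorem exists_triangle (hS : IsUnimodularFan S) (hmin : IsMinimalFan S)
    (hne : ∀ ⦃p v s : ℤ × ℤ⦄, SmoothCone S p v → SmoothCone S v s → latDet p s ≠ 0) :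
    ∃ p w, SmoothCone S p w ∧ SmoothCone S w (-(p + w)) ∧ SmoothCone S (-(p + w)) p := by
  obtain ⟨v, hv⟩ := hS.nonempty
  obtain ⟨p, w, s, hpw, hws, -, hps⟩ := hS.exists_left_latDet_nonpos hmin hv
  obtain ⟨q, r, t, hqr, hrt, hpr, hqt⟩ := hS.exists_right_latDet_nonpos hmin hpw.left_mem
  have hleft : ∀ x ∈ S, 0 < latDet p x → x = w := fun x hx => hS.eq_of_latDet_pos hpw hws hps hx
  have hps_neg : latDet p s < 0 := hps.lt_of_ne (hne hpw hws)
  have hqt_neg : latDet q t < 0 := hqt.lt_of_ne (hne hqr hrt)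
  obtain rfl : q = w := by
    refine hleft q hqr.left_mem ?_
    by_contra! hpq
    have hsum : 0 < latDet p q + latDet p t := by
      rw [latDet_add_latDet_eq_mul hqr.1 hrt.1]
      exact mul_pos_of_neg_of_neg hqt_neg hpr
    obtain rfl := hleft t hrt.right_mem (by omega)
    obtain rfl := hrt.left_unique hpw
    simp at hpr
  obtain rfl := hqr.right_unique hws
  obtain ⟨rfl, rfl⟩ := hS.eq_neg_add_and_eq_of_latDet_neg hpw hws hrt hps_neg hqt_neg
  exact ⟨_, _, hpw, hws, hrt⟩

theorem eq_triangle (hS : IsUnimodularFan S) (hpw : SmoothCone S p w)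
    (hws : SmoothCone S w (-(p + w))) (hsp : SmoothCone S (-(p + w)) p) :
    S = {p, w, -(p + w)} := by
  ext x
  simp only [Set.mem_insert_iff, Set.mem_singleton_iff]
  constructor
  · intro hx
    have hcover : (0 ≤ latDet p x ∧ 0 ≤ latDet x w) ∨
        (0 ≤ latDet w x ∧ 0 ≤ latDet x (-(p + w))) ∨
        (0 ≤ latDet (-(p + w)) x ∧ 0 ≤ latDet x p) := by
      simp only [latDet_neg_left, latDet_neg_right, latDet_add_left, latDet_add_right,
        ← latDet_anticomm p x, ← latDet_anticomm x w]
      omega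
    rcases hcover with ⟨h₁, h₂⟩ | ⟨h₁, h₂⟩ | ⟨h₁, h₂⟩
    · have := hS.eq_or_eq_of_mem_cone hpw hx h₁ h₂; tauto
    · have := hS.eq_or_eq_of_mem_cone hws hx h₁ h₂; tauto
    · have := hS.eq_or_eq_of_mem_cone hsp hx h₁ h₂; tauto
  · rintro (rfl | rfl | rfl)
    exacts [hpw.left_mem, hws.left_mem, hsp.left_mem]

theorem eq_quadrangle (hS : IsUnimodularFan S) {w' : ℤ × ℤ} (hpw : SmoothCone S p w)
    (hwp : SmoothCone S w (-p)) (hpw' : SmoothCone S (-p) w') (hw'p : SmoothCone S w' p) :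
    S = {p, w, -p, w'} := by
  ext x
  simp only [Set.mem_insert_iff, Set.mem_singleton_iff]
  constructor
  · intro hx
    have hcover : (0 ≤ latDet p x ∧ 0 ≤ latDet x w) ∨ (0 ≤ latDet w x ∧ 0 ≤ latDet x (-p)) ∨
        (0 ≤ latDet (-p) x ∧ 0 ≤ latDet x w') ∨ (0 ≤ latDet w' x ∧ 0 ≤ latDet x p) := by
      simp only [latDet_neg_left, latDet_neg_right, ← latDet_anticomm p x, ← latDet_anticomm x w,
        ← latDet_anticomm x w']
      omega
    rcases hcover with ⟨h₁, h₂⟩ | ⟨h₁, h₂⟩ | ⟨h₁, h₂⟩ | ⟨h₁, h₂⟩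
    · have := hS.eq_or_eq_of_mem_cone hpw hx h₁ h₂; tauto
    · have := hS.eq_or_eq_of_mem_cone hwp hx h₁ h₂; tauto
    · have := hS.eq_or_eq_of_mem_cone hpw' hx h₁ h₂; tauto
    · have := hS.eq_or_eq_of_mem_cone hw'p hx h₁ h₂; tauto
  · rintro (rfl | rfl | rfl | rfl)
    exacts [hpw.left_mem, hwp.left_mem, hpw'.left_mem, hw'p.left_mem]

end IsUnimodularFan

section StandardCharts

variable {p w : ℤ × ℤ}

theorem image_coordMatrix_triangle (h : latDet p w = 1) :
    matVec (coordMatrix p w) '' {p, w, -(p + w)} = {(1, 0), (0, 1), (-1, -1)} := by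
  simp [Set.image_insert_eq, matVec_coordMatrix, h]

theorem image_coordMatrix_quadrangle (h : latDet p w = 1) {w' : ℤ × ℤ} {n : ℕ}
    (hw' : w' + w = (n : ℤ) • p) :
    matVec (coordMatrix w (-p)) '' {p, w, -p, w'} = hirzebruchFan n := by
  have hwp : latDet w p = -1 := by rw [← latDet_anticomm, h]
  obtain rfl : w' = (n : ℤ) • p + -w := by rw [← hw', add_neg_cancel_right]
  -- The excluded lemmas turn `n • p` into a product in the ring `ℤ × ℤ`.
  simp [Set.image_insert_eq, matVec_coordMatrix, hirzebruchFan, hwp, -natCast_zsmul,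
    -zsmul_eq_mul]

theorem exists_image_quadrangle_eq_hirzebruchFan {w' : ℤ × ℤ} (hpw : latDet p w = 1)
    (hw'p : latDet w' p = 1) :
    ∃ A : Matrix (Fin 2) (Fin 2) ℤ, A.det = 1 ∧
      ∃ n : ℕ, matVec A '' {p, w, -p, w'} = hirzebruchFan n := by
  have hsum : w' + w = latDet w' w • p := add_eq_latDet_smul hw'p hpw
  rcases le_total 0 (latDet w' w) with hc | hc
  · lift latDet w' w to ℕ using hc with n
    refine ⟨coordMatrix w (-p), ?_, n, image_coordMatrix_quadrangle hpw hsum⟩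
    rw [det_coordMatrix, latDet_neg_right, latDet_anticomm, hpw]
  · have hpw' : latDet (-p) w' = 1 := by rw [latDet_neg_left, latDet_anticomm, hw'p]
    have hsum' : w + w' = (-latDet w' w) • -p := by rw [smul_neg, neg_smul, neg_neg, add_comm, hsum]
    have hperm : ({p, w, -p, w'} : Set (ℤ × ℤ)) = {-p, w', -(-p), w} := by
      rw [neg_neg]; grind
    lift -latDet w' w to ℕ using neg_nonneg.2 hc with n
    refine ⟨coordMatrix w' (-(-p)), ?_, n, hperm ▸ image_coordMatrix_quadrangle hpw' hsum'⟩
    rw [det_coordMatrix, neg_neg, hw'p]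

end StandardCharts

theorem IsMinimalFan.exists_image_eq {S : Set (ℤ × ℤ)} (hmin : IsMinimalFan S)
    (hS : IsUnimodularFan S) :
    ∃ A : Matrix (Fin 2) (Fin 2) ℤ, A.det = 1 ∧
      (matVec A '' S = {(1, 0), (0, 1), (-1, -1)} ∨
        ∃ n : ℕ, matVec A '' S = hirzebruchFan n) := by
  by_cases hne : ∀ ⦃p v s : ℤ × ℤ⦄, SmoothCone S p v → SmoothCone S v s → latDet p s ≠ 0
  · obtain ⟨p, w, hpw, hws, hsp⟩ := hS.exists_triangle hmin hne
    refine ⟨coordMatrix p w, by rw [det_coordMatrix, hpw.1], .inl ?_⟩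
    rw [hS.eq_triangle hpw hws hsp, image_coordMatrix_triangle hpw.1]
  · simp only [not_forall, ne_eq, not_not] at hne
    obtain ⟨p, w, s, hpw, hws, hps⟩ := hne
    obtain rfl : s = -p := by
      apply eq_neg_of_add_eq_zero_right
      rw [add_eq_latDet_smul hpw.1 hws.1, hps, zero_smul]
    obtain ⟨w', hpw', hw'p⟩ := hS.exists_quadrangle hmin hpw hws
    obtain ⟨A, hA, hAS⟩ := exists_image_quadrangle_eq_hirzebruchFan hpw.1 hw'p.1
    rw [← hS.eq_quadrangle hpw hws hpw' hw'p] at hAS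
    exact ⟨A, hA, .inr hAS⟩

/-- For every smooth complete fan `S ⊆ ℤ²` there is a matrix
`A ∈ GL₂(ℤ)` such that `A·S` is obtained by a finite sequence of toric blow-up steps
from either `{(1,0),(0,1),(−1,−1)}` (the ray set of the fan of `ℂP²`) or from `Σ_n`
for some `n ≥ 0` (the ray set of the fan of the Hirzebruch surface `F_n`): every
smooth compact toric surface is an iterated toric blow-up of `ℂP²` or of a Hirzebruch
surface. -/
theorem smooth_complete_fan_classification (S : Set (ℤ × ℤ))
    (hS : IsSmoothCompleteFan S) :
    ∃ A : Matrix (Fin 2) (Fin 2) ℤ, IsUnit A.det ∧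
      ((∃ m : ℕ, BlowUpSeq m ({(1, 0), (0, 1), (-1, -1)} : Set (ℤ × ℤ)) (matVec A '' S)) ∨
        ∃ n m : ℕ, BlowUpSeq m (hirzebruchFan n) (matVec A '' S)) := by
  obtain ⟨R, m, hR, hmin, hRS⟩ := hS.isUnimodularFan.exists_isMinimalFan_blowUpSeq
  obtain ⟨A, hA, hAR⟩ := hmin.exists_image_eq hR
  have hseq : BlowUpSeq m (matVec A '' R) (matVec A '' S) := hRS.image_matVec (hA ▸ one_pos)
  refine ⟨A, hA ▸ isUnit_one, ?_⟩
  rcases hAR with hAR | ⟨n, hAR⟩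
  · exact .inl ⟨m, hAR ▸ hseq⟩
  · exact .inr ⟨n, m, hAR ▸ hseq⟩
end
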